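/- For all n ≥ 3 and all t ≥ 0, P( max_{1 ≤ i,j ≤ n} |P_{ij}| ≥ α* log n + t ) ≤ e^{α* + t/log n} · e^{−t}. -/

import Mathlib

/-! The shortest-path tree of a vertex in `K_n` with i.i.d. exponential weights is a random
recursive tree, and the bound follows from a first moment computation for the depths in such
a tree.

Explore `K_n` from a vertex `i`: whenever `S` is the set of explored vertices, traverse the
lightest edge of the cut between `S` and its complement. By memorylessness this edge is uniform in
the cut, and after subtracting its weight from the other edges of the cut one has i.i.d.
exponential weights again (`measure_argmin_residual`). So the new vertex is attached to a uniform
vertex of `S`, and `∑ s ∈ S, z ^ depth s` grows in mean by the factor `1 + z / #S`. Hence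
the exploration reaches depth `K` with probability at most
`z ^ (-K) * ∏ k ∈ [1, n - 1], (1 + z / k) ≤ z ^ (-K) * exp (z * (1 + log n))`
(`measure_Deep_le`, `prod_le_exp`). A minimum-weight path starting at `i` is a branch of
the exploration tree, hence a path with at least `K` edges forces depth at least `K`
(`mem_Deep`, `exists_mem_Deep`). With ties the exploration may be chosen so as to follow the
given path, so a union bound over all exploration histories makes it unnecessary to discuss ties.

A union bound over the `n` roots, with `z = αs` and `K = αs * log n + t`, gives
`exp αs * αs ^ (-t)`, since `αs * log αs = 1 + αs`; finally `log αs ≥ 1`. -/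

open MeasureTheory ProbabilityTheory Real Filter

/-- The complete graph on `n` vertices. -/
def Kn (n : ℕ) : SimpleGraph (Fin n) := ⊤

/-- The canonical probability space for i.i.d. `Exp(mean n)` edge weights on `K_n`:
weights are indexed by `Sym2 (Fin n)` and each coordinate has the exponential
distribution with rate `1/n` (mean `n`). -/
noncomputable def edgeSpace (n : ℕ) : Measure (Sym2 (Fin n) → ℝ) :=
  haveI : ∀ _e : Sym2 (Fin n), SigmaFinite (expMeasure (1 / (n : ℝ))) := fun _e =>
    SigmaFinite.withDensity_of_ne_top' (fun _x => ENNReal.ofReal_ne_top)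
  Measure.pi (fun _e : Sym2 (Fin n) => expMeasure (1 / (n : ℝ)))

/-- The weight of a walk: the sum of the weights of its edges. -/
noncomputable def walkWeight {n : ℕ} (w : Sym2 (Fin n) → ℝ) {i j : Fin n}
    (p : (Kn n).Walk i j) : ℝ := (p.edges.map w).sum

/-- `p` is a minimum-weight path from `i` to `j`. -/
def IsMinPath {n : ℕ} (w : Sym2 (Fin n) → ℝ) {i j : Fin n} (p : (Kn n).Walk i j) : Prop :=
  p.IsPath ∧ ∀ q : (Kn n).Walk i j, q.IsPath → walkWeight w p ≤ walkWeight w q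

/-- `max_{1 ≤ i,j ≤ n} |P_{ij}|` : the largest number of edges of any
minimum-weight path between a pair of vertices. -/
noncomputable def maxMinLen {n : ℕ} (w : Sym2 (Fin n) → ℝ) : ℕ :=
  sSup {L : ℕ | ∃ (i j : Fin n) (p : (Kn n).Walk i j), IsMinPath w p ∧ p.length = L}

/-! ### Memorylessness and residual weights -/

theorem expMeasure_eq (r : ℝ) :
    expMeasure r = volume.withDensity (exponentialPDF r) := rfl

theorem measurable_expPDF (r : ℝ) : Measurable (exponentialPDF r) :=
  (measurable_exponentialPDFReal r).ennreal_ofReal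

theorem expMeasure_eq_lintegral (r : ℝ) {B : Set ℝ} (hB : MeasurableSet B) :
    expMeasure r B = ∫⁻ x, B.indicator (exponentialPDF r) x := by
  rw [expMeasure_eq, withDensity_apply _ hB, lintegral_indicator hB]

theorem expMeasure_ae_nonneg (r : ℝ) : ∀ᵐ x ∂(expMeasure r), 0 ≤ x := by
  have hs : {x : ℝ | ¬ 0 ≤ x} = Set.Iio 0 := by
    ext x
    simp
  rw [ae_iff, hs, expMeasure_eq, withDensity_apply _ measurableSet_Iio]
  exact lintegral_exponentialPDF_of_nonpos le_rfl

/-- Memorylessness of the exponential distribution. -/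
theorem expMeasure_shift {r x : ℝ} (hx : 0 ≤ x) {B : Set ℝ} (hB : MeasurableSet B) :
    expMeasure r {y | x ≤ y ∧ y - x ∈ B} =
      ENNReal.ofReal (Real.exp (-(r * x))) * expMeasure r B := by
  have hm : MeasurableSet {y : ℝ | x ≤ y ∧ y - x ∈ B} :=
    measurableSet_Ici.inter (measurable_id.sub_const x hB)
  rw [expMeasure_eq_lintegral r hm, expMeasure_eq_lintegral r hB,
    ← lintegral_const_mul _ ((measurable_expPDF r).indicator hB),
    ← lintegral_sub_right_eq_self (fun y => ENNReal.ofReal (Real.exp (-(r * x))) *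
      B.indicator (exponentialPDF r) y) x]
  refine lintegral_congr fun y => ?_
  by_cases hy : x ≤ y
  · by_cases hyB : y - x ∈ B
    · rw [Set.indicator_of_mem (show y ∈ {y : ℝ | x ≤ y ∧ y - x ∈ B} from ⟨hy, hyB⟩),
        Set.indicator_of_mem hyB, exponentialPDF_of_nonneg (hx.trans hy),
        exponentialPDF_of_nonneg (sub_nonneg.2 hy), ← ENNReal.ofReal_mul (Real.exp_nonneg _)]
      congr 1
      rw [show -(r * y) = -(r * x) + -(r * (y - x)) by ring, Real.exp_add]
      ring
    · rw [Set.indicator_of_notMem (fun h => hyB h.2), Set.indicator_of_notMem hyB, mul_zero]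
  · rw [Set.indicator_of_notMem (fun h => hy h.1)]
    by_cases hyB : y - x ∈ B
    · rw [Set.indicator_of_mem hyB, exponentialPDF_of_neg (by linarith), mul_zero]
    · rw [Set.indicator_of_notMem hyB, mul_zero]

/-- The minimum of `k` independent exponentials of rate `r`, multiplied by `k`, is again
exponential of rate `r`: here the survival function of the other `k - 1` clocks appears as
the weight `exp (-r x) ^ (k - 1)`. -/
theorem expMeasure_scale {r : ℝ} {k : ℕ} (hk : 0 < k) {B : Set ℝ}
    (hB : MeasurableSet B) :
    (k : ENNReal) * ∫⁻ x, {x : ℝ | (k : ℝ) * x ∈ B}.indicator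
      (fun x => ENNReal.ofReal (Real.exp (-(r * x))) ^ (k - 1)) x ∂(expMeasure r) =
      expMeasure r B := by
  have hk0 : (0 : ℝ) < k := by exact_mod_cast hk
  have hm : MeasurableSet {x : ℝ | (k : ℝ) * x ∈ B} := measurable_const_mul (k : ℝ) hB
  have hF : Measurable (B.indicator (exponentialPDF r)) := (measurable_expPDF r).indicator hB
  have hmap : ∫⁻ x : ℝ, B.indicator (exponentialPDF r) ((k : ℝ) * x) =
      ENNReal.ofReal |(k : ℝ)⁻¹| * ∫⁻ x, B.indicator (exponentialPDF r) x := by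
    rw [← lintegral_map hF (measurable_const_mul (k : ℝ)),
      Real.map_volume_mul_left hk0.ne', lintegral_smul_measure, smul_eq_mul]
  have hg : Measurable (fun x : ℝ => ENNReal.ofReal (Real.exp (-(r * x))) ^ (k - 1)) := by
    fun_prop
  rw [expMeasure_eq_lintegral r hB, expMeasure_eq,
    lintegral_withDensity_eq_lintegral_mul _ (measurable_expPDF r) (hg.indicator hm)]
  have hpt : ∀ x : ℝ, (exponentialPDF r * {x : ℝ | (k : ℝ) * x ∈ B}.indicator
      (fun x => ENNReal.ofReal (Real.exp (-(r * x))) ^ (k - 1))) x =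
      B.indicator (exponentialPDF r) ((k : ℝ) * x) := by
    intro x
    rw [Pi.mul_apply]
    by_cases hxB : (k : ℝ) * x ∈ B
    · rw [Set.indicator_of_mem (show x ∈ {x : ℝ | (k : ℝ) * x ∈ B} from hxB),
        Set.indicator_of_mem hxB]
      rcases lt_or_ge x 0 with hx | hx
      · rw [exponentialPDF_of_neg hx, exponentialPDF_of_neg (mul_neg_of_pos_of_neg hk0 hx),
          zero_mul]
      · rw [exponentialPDF_of_nonneg hx, exponentialPDF_of_nonneg (by positivity),
          ← ENNReal.ofReal_pow (Real.exp_nonneg _), ← ENNReal.ofReal_mul' (by positivity)]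
        congr 1
        rw [mul_assoc, ← pow_succ', Nat.sub_add_cancel hk, ← Real.exp_nat_mul]
        congr 2
        ring
    · rw [Set.indicator_of_notMem (show x ∉ {x : ℝ | (k : ℝ) * x ∈ B} from hxB),
        Set.indicator_of_notMem hxB, mul_zero]
  rw [lintegral_congr hpt, hmap, ← mul_assoc, abs_of_pos (by positivity),
    ENNReal.ofReal_inv_of_pos hk0, ENNReal.ofReal_natCast,
    ENNReal.mul_inv_cancel (by exact_mod_cast hk.ne') (ENNReal.natCast_ne_top k), one_mul]

/-- The weights seen from the moment at which `e`, the lightest edge of `C`, has been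
traversed: the edges of `C` other than `e` keep their residualWeights weight. The coordinate `e` is no
longer needed; rescaling it by `#C` makes the new weights have the same law as the old ones. -/
noncomputable def residualWeights {ι : Type*} [DecidableEq ι] (C : Finset ι) (e : ι) (w : ι → ℝ) :
    ι → ℝ :=
  fun c => if c = e then (C.card : ℝ) * w e else if c ∈ C then w c - w e else w c

theorem measurable_residual {ι : Type*} [DecidableEq ι] (C : Finset ι) (e : ι) :
    Measurable (residualWeights C e) := by
  refine measurable_pi_iff.2 fun c => ?_
  unfold residualWeights
  split_ifs <;> fun_prop

theorem measurableSet_argmin {ι : Type*} (C : Finset ι) (e : ι) :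
    MeasurableSet {w : ι → ℝ | ∀ c ∈ C, w e ≤ w c} := by
  simp only [Set.ofPred_forall]
  exact Finset.measurableSet_biInter C fun c _ =>
    measurableSet_le (measurable_pi_apply e) (measurable_pi_apply c)

/-- Restricted to the event that `e` is the lightest edge of `C`, an event of probability
`1 / #C`, the residual weights are i.i.d. exponential. It suffices to compare the measures of
boxes, by Fubini in the coordinate `e`. -/
theorem residual_map {ι : Type*} [Fintype ι] [DecidableEq ι] {r : ℝ}
    (C : Finset ι) {e : ι} (he : e ∈ C) [IsProbabilityMeasure (expMeasure r)] :
    Measure.pi (fun _ : ι => expMeasure r) = (C.card : ENNReal) •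
      ((Measure.pi (fun _ : ι => expMeasure r)).restrict
        {w | ∀ c ∈ C, w e ≤ w c}).map (residualWeights C e) := by
  refine Measure.pi_eq fun B hB => ?_
  have hBm : MeasurableSet (Set.pi Set.univ B) := MeasurableSet.univ_pi hB
  have hcard : 0 < C.card := Finset.card_pos.2 ⟨e, he⟩
  rw [Measure.smul_apply, Measure.map_apply (measurable_residual C e) hBm,
    Measure.restrict_apply (measurable_residual C e hBm), smul_eq_mul]
  -- the instance used by `measurePreserving_piEquivPiSubtypeProd`
  let _ : Fintype {i // i = e} := Subtype.fintype fun i => i = e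
  -- condition on the value `x` of the coordinate `e`
  let D : ℝ → ι → Set ℝ := fun x c => if c ∈ C then {y | x ≤ y ∧ y - x ∈ B c} else B c
  let E : Set (({i // i = e} → ℝ) × ({i // ¬ i = e} → ℝ)) :=
    {p | (C.card : ℝ) * p.1 ⟨e, rfl⟩ ∈ B e ∧ ∀ c : {i // ¬ i = e}, p.2 c ∈ D (p.1 ⟨e, rfl⟩) c}
  have hset : residualWeights C e ⁻¹' Set.pi Set.univ B ∩ {w | ∀ c ∈ C, w e ≤ w c} =
      (MeasurableEquiv.piEquivPiSubtypeProd (fun _ : ι => ℝ) (fun i => i = e)) ⁻¹' E := by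
    ext w
    simp only [Set.mem_inter_iff, Set.mem_preimage, Set.mem_pi, Set.mem_univ, true_imp_iff,
      Set.mem_ofPred_eq, residualWeights, E, D, MeasurableEquiv.piEquivPiSubtypeProd,
      Equiv.piEquivPiSubtypeProd, MeasurableEquiv.coe_mk, Equiv.coe_fn_mk, Subtype.forall]
    constructor
    · rintro ⟨h1, h2⟩
      refine ⟨by simpa using h1 e, fun c hc => ?_⟩
      have := h1 c
      rw [if_neg hc] at this
      by_cases hcC : c ∈ C
      · simp only [if_pos hcC, Set.mem_ofPred_eq] at this ⊢
        exact ⟨h2 c hcC, this⟩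
      · simpa only [if_neg hcC] using this
    · rintro ⟨h1, h2⟩
      refine ⟨fun c => ?_, fun c hcC => ?_⟩
      · by_cases hc : c = e
        · subst hc
          simpa using h1
        · rw [if_neg hc]
          have := h2 c hc
          by_cases hcC : c ∈ C
          · simp only [if_pos hcC, Set.mem_ofPred_eq] at this ⊢
            exact this.2
          · simpa only [if_neg hcC] using this
      · by_cases hc : c = e
        · rw [hc]
        · have := h2 c hc
          simp only [if_pos hcC, Set.mem_ofPred_eq] at this
          exact this.1
  have hE : MeasurableSet E := by
    have h := (measurable_residual C e hBm).inter (measurableSet_argmin C e)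
    rw [hset] at h
    exact (MeasurableEquiv.measurableSet_preimage _).1 h
  rw [hset, (measurePreserving_piEquivPiSubtypeProd (fun _ : ι => expMeasure r)
    (fun i => i = e)).measure_preimage hE.nullMeasurableSet, Measure.prod_apply hE]
  set b : ENNReal := ∏ c : {i // ¬ i = e}, expMeasure r (B c) with hb
  let g : ℝ → ENNReal := fun x => b * {x : ℝ | (C.card : ℝ) * x ∈ B e}.indicator
      (fun x => ENNReal.ofReal (Real.exp (-(r * x))) ^ (C.card - 1)) x
  have hgm : Measurable ({x : ℝ | (C.card : ℝ) * x ∈ B e}.indicator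
      (fun x => ENNReal.ofReal (Real.exp (-(r * x))) ^ (C.card - 1))) :=
    Measurable.indicator (by fun_prop) (measurable_const_mul (C.card : ℝ) (hB e))
  have hpres : MeasurePreserving (MeasurableEquiv.funUnique {i // i = e} ℝ)
      (Measure.pi fun _ : {i // i = e} => expMeasure r) (expMeasure r) := by
    convert! measurePreserving_funUnique (expMeasure r) {i // i = e}
  have hae : ∀ᵐ x ∂(Measure.pi fun _ : {i // i = e} => expMeasure r), 0 ≤ x ⟨e, rfl⟩ :=
    (measurePreserving_eval (fun _ : {i // i = e} => expMeasure r)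
      ⟨e, rfl⟩).quasiMeasurePreserving.ae (expMeasure_ae_nonneg r)
  have hslice : ∀ᵐ x ∂(Measure.pi fun _ : {i // i = e} => expMeasure r),
      Measure.pi (fun _ : {i // ¬ i = e} => expMeasure r) (Prod.mk x ⁻¹' E) =
        g (MeasurableEquiv.funUnique {i // i = e} ℝ x) := by
    filter_upwards [hae] with x hx
    have hxe : MeasurableEquiv.funUnique {i // i = e} ℝ x = x ⟨e, rfl⟩ := rfl
    rw [hxe]
    by_cases hxB : (C.card : ℝ) * x ⟨e, rfl⟩ ∈ B e
    · have h1 : Prod.mk x ⁻¹' E = Set.pi Set.univ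
          (fun c : {i // ¬ i = e} => D (x ⟨e, rfl⟩) c) := by
        ext v
        simp [E, hxB]
      have h2 : ∀ c : {i // ¬ i = e}, expMeasure r (D (x ⟨e, rfl⟩) c) =
          (if (c : ι) ∈ C then ENNReal.ofReal (Real.exp (-(r * x ⟨e, rfl⟩))) else 1) *
            expMeasure r (B c) := by
        intro c
        by_cases hc : (c : ι) ∈ C
        · simp only [D, if_pos hc]
          exact expMeasure_shift hx (hB c)
        · simp only [D, if_neg hc, one_mul]
      have h3 : ∏ c : {i // ¬ i = e},
          (if (c : ι) ∈ C then ENNReal.ofReal (Real.exp (-(r * x ⟨e, rfl⟩))) else 1) =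
          ENNReal.ofReal (Real.exp (-(r * x ⟨e, rfl⟩))) ^ (C.card - 1) := by
        rw [← Finset.prod_subtype (Finset.univ.erase e) (by simp)
          (fun c => if c ∈ C then ENNReal.ofReal (Real.exp (-(r * x ⟨e, rfl⟩))) else 1),
          Finset.prod_ite, Finset.prod_const_one, mul_one, Finset.prod_const,
          ← Finset.card_erase_of_mem he]
        congr 2
        ext c
        simp
      rw [h1, Measure.pi_pi, Finset.prod_congr rfl (fun c _ => h2 c), Finset.prod_mul_distrib, h3]
      simp only [g]
      rw [Set.indicator_of_mem (show x ⟨e, rfl⟩ ∈ {x : ℝ | (C.card : ℝ) * x ∈ B e} from hxB),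
        mul_comm]
    · have h1 : Prod.mk x ⁻¹' E = ∅ := by
        ext v
        simp [E, hxB]
      simp only [g]
      rw [h1, Set.indicator_of_notMem
        (show x ⟨e, rfl⟩ ∉ {x : ℝ | (C.card : ℝ) * x ∈ B e} from hxB), measure_empty, mul_zero]
  rw [lintegral_congr_ae hslice, hpres.lintegral_comp (f := g) (hgm.const_mul b)]
  simp only [g]
  rw [lintegral_const_mul _ hgm, mul_left_comm, expMeasure_scale hcard (hB e), hb,
    ← Finset.prod_subtype (Finset.univ.erase e) (by simp) (fun c => expMeasure r (B c)),
    Finset.prod_erase_mul _ _ (Finset.mem_univ e)]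

/-- Each of the `#C` edges of `C` is the lightest with probability `1 / #C`, and given
this the residualWeights weights are again i.i.d. exponential. -/
theorem measure_argmin_residual {ι : Type*} [Fintype ι] [DecidableEq ι] {r : ℝ}
    (C : Finset ι) {e : ι} (he : e ∈ C) [IsProbabilityMeasure (expMeasure r)]
    {H : Set (ι → ℝ)} (hH : MeasurableSet H) :
    Measure.pi (fun _ : ι => expMeasure r) {w | (∀ c ∈ C, w e ≤ w c) ∧ residualWeights C e w ∈ H} =
      (C.card : ENNReal)⁻¹ * Measure.pi (fun _ : ι => expMeasure r) H := by
  have hk : (C.card : ENNReal) ≠ 0 := by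
    exact_mod_cast (Finset.card_pos.2 ⟨e, he⟩).ne'
  conv_rhs => rw [residual_map C he]
  rw [Measure.smul_apply, Measure.map_apply (measurable_residual C e) hH,
    Measure.restrict_apply (measurable_residual C e hH), smul_eq_mul, ← mul_assoc,
    ENNReal.inv_mul_cancel hk (ENNReal.natCast_ne_top _), one_mul]
  congr 1
  ext w
  exact and_comm

/-! ### The exploration and its depth -/

/-- The edges between `S` and its complement. -/
def cutEdges {n : ℕ} (S : Finset (Fin n)) : Finset (Sym2 (Fin n)) :=
  (S ×ˢ Sᶜ).image fun p => s(p.1, p.2)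

theorem mk_mem_cutEdges {n : ℕ} {S : Finset (Fin n)} {a b : Fin n} :
    s(a, b) ∈ cutEdges S ↔ (a ∈ S ∧ b ∉ S) ∨ (b ∈ S ∧ a ∉ S) := by
  simp only [cutEdges, Finset.mem_image, Finset.mem_product, Finset.mem_compl, Prod.exists,
    Sym2.eq_iff]
  constructor
  · rintro ⟨x, y, ⟨hx, hy⟩, ⟨rfl, rfl⟩ | ⟨rfl, rfl⟩⟩
    · exact Or.inl ⟨hx, hy⟩
    · exact Or.inr ⟨hx, hy⟩
  · rintro (⟨h1, h2⟩ | ⟨h1, h2⟩)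
    · exact ⟨a, b, ⟨h1, h2⟩, Or.inl ⟨rfl, rfl⟩⟩
    · exact ⟨b, a, ⟨h1, h2⟩, Or.inr ⟨rfl, rfl⟩⟩

theorem card_cutEdges {n : ℕ} (S : Finset (Fin n)) :
    (cutEdges S).card = S.card * Sᶜ.card := by
  rw [cutEdges, Finset.card_image_of_injOn, Finset.card_product]
  rintro ⟨a, b⟩ hab ⟨c, d⟩ hcd h
  simp only [Finset.coe_product, Set.mem_prod, Finset.mem_coe, Finset.mem_compl] at hab hcd
  rcases Sym2.eq_iff.1 h with ⟨h1, h2⟩ | ⟨h1, h2⟩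
  · exact Prod.ext h1 h2
  · exact absurd ((show b = c from h2) ▸ hcd.1) hab.2

/-- `Deep K m S ℓ` is the event that first-passage exploration, started from the explored set
`S` whose vertices `s` are given the depths `ℓ s`, produces after `m` steps a vertex of depth at
least `K`. In each step the lightest edge `s(a, b)` of the cut of `S` is traversed, `b` gets depth
`ℓ a + 1`, and the remaining weights are replaced by the residual ones. If the lightest
edge is not unique, every choice is allowed. -/
def Deep {n : ℕ} (K : ℝ) : ℕ → Finset (Fin n) → (Fin n → ℕ) → Set (Sym2 (Fin n) → ℝ)
  | 0, S, ℓ => {_w | ∃ s ∈ S, K ≤ (ℓ s : ℝ)}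
  | m + 1, S, ℓ => ⋃ p ∈ S ×ˢ Sᶜ, {w | (∀ c ∈ cutEdges S, w s(p.1, p.2) ≤ w c) ∧
      residualWeights (cutEdges S) s(p.1, p.2) w ∈
        Deep K m (insert p.2 S) (Function.update ℓ p.2 (ℓ p.1 + 1))}

theorem measurableSet_Deep {n : ℕ} (K : ℝ) (m : ℕ) : ∀ (S : Finset (Fin n)) (ℓ : Fin n → ℕ),
    MeasurableSet (Deep K m S ℓ) := by
  induction m with
  | zero => exact fun S ℓ => MeasurableSet.const _
  | succ m ih =>
    intro S ℓ
    rw [Deep]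
    exact Finset.measurableSet_biUnion _ fun p _ => (measurableSet_argmin _ _).inter
      (measurable_residual _ _ (ih _ _))

/-- The expectation of `∑ z ^ depth` grows by the factor `1 + z / #S` when a new vertex is
attached to a uniformly chosen vertex of `S`; Markov's inequality at the last step. -/
theorem measure_Deep_le {n : ℕ} {r : ℝ} [IsProbabilityMeasure (expMeasure r)]
    {z : ℝ} (hz : 1 ≤ z) (K : ℝ) (m : ℕ) : ∀ (S : Finset (Fin n)) (ℓ : Fin n → ℕ),
    S.Nonempty → Sᶜ.card = m →
    Measure.pi (fun _ : Sym2 (Fin n) => expMeasure r) (Deep K m S ℓ) ≤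
      ENNReal.ofReal (z ^ (-K) * (∑ s ∈ S, z ^ ℓ s) *
        ∏ k ∈ Finset.range m, (1 + z / ((S.card : ℝ) + k))) := by
  have hz0 : 0 < z := by linarith
  induction m with
  | zero =>
    intro S ℓ _ _
    rw [Deep]
    by_cases h : ∃ s ∈ S, K ≤ (ℓ s : ℝ)
    · obtain ⟨s, hs, hK⟩ := h
      refine prob_le_one.trans ?_
      rw [Finset.range_zero, Finset.prod_empty, mul_one, ENNReal.one_le_ofReal]
      calc (1 : ℝ) ≤ z ^ (-K) * z ^ ℓ s := by
            rw [← Real.rpow_natCast, ← Real.rpow_add hz0]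
            exact Real.one_le_rpow hz (by linarith)
        _ ≤ _ := by
            gcongr
            exact Finset.single_le_sum (f := fun s => z ^ ℓ s)
              (fun i _ => (pow_pos hz0 _).le) hs
    · have : {_w : Sym2 (Fin n) → ℝ | ∃ s ∈ S, K ≤ (ℓ s : ℝ)} = ∅ := by
        ext w
        simpa using h
      rw [this, measure_empty]
      exact zero_le
  | succ m ih =>
    intro S ℓ hS hm
    rw [Deep]
    have hSc : (0 : ℝ) < S.card := by exact_mod_cast hS.card_pos
    have hUc : (0 : ℝ) < Sᶜ.card := by
      rw [hm]
      positivity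
    set c : ℝ := z ^ (-K) with hc
    have hc0 : 0 < c := Real.rpow_pos_of_pos hz0 _
    set Φ : ℝ := ∑ s ∈ S, z ^ ℓ s with hΦ
    set Q : ℝ := ∏ k ∈ Finset.range m, (1 + z / ((S.card : ℝ) + (k + 1 : ℕ))) with hQ
    have hQ0 : 0 ≤ Q := Finset.prod_nonneg fun k _ => by positivity
    have hΦ0 : 0 ≤ Φ := Finset.sum_nonneg fun k _ => by positivity
    have hterm : ∀ p ∈ S ×ˢ Sᶜ, Measure.pi (fun _ : Sym2 (Fin n) => expMeasure r)
        {w | (∀ c ∈ cutEdges S, w s(p.1, p.2) ≤ w c) ∧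
          residualWeights (cutEdges S) s(p.1, p.2) w ∈
            Deep K m (insert p.2 S) (Function.update ℓ p.2 (ℓ p.1 + 1))} ≤
        ENNReal.ofReal (((S.card : ℝ) * Sᶜ.card)⁻¹ * (c * (Φ + z * z ^ ℓ p.1) * Q)) := by
      rintro ⟨a, b⟩ hab
      simp only [Finset.mem_product, Finset.mem_compl] at hab
      obtain ⟨ha, hb⟩ := hab
      have hcard : (insert b S)ᶜ.card = m := by
        have h1 := Finset.card_compl_add_card S
        have h2 := Finset.card_compl_add_card (insert b S)
        rw [Finset.card_insert_of_notMem hb] at h2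
        omega
      rw [measure_argmin_residual (cutEdges S) (mk_mem_cutEdges.2 (Or.inl ⟨ha, hb⟩))
        (measurableSet_Deep _ _ _ _), ENNReal.ofReal_mul (by positivity),
        ENNReal.ofReal_inv_of_pos (by positivity), card_cutEdges, ← Nat.cast_mul,
        ENNReal.ofReal_natCast]
      gcongr
      refine (ih (insert b S) _ (Finset.insert_nonempty _ _) hcard).trans (le_of_eq ?_)
      congr 2
      · congr 1
        rw [Finset.sum_insert hb, Function.update_self, pow_succ', add_comm]
        congr 1
        refine Finset.sum_congr rfl fun s hs => ?_
        rw [Function.update_of_ne (ne_of_mem_of_not_mem hs hb)]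
      · refine Finset.prod_congr rfl fun k _ => ?_
        rw [Finset.card_insert_of_notMem hb]
        push_cast
        ring
    refine (measure_biUnion_finset_le _ _).trans ((Finset.sum_le_sum hterm).trans ?_)
    rw [← ENNReal.ofReal_sum_of_nonneg fun p _ => by positivity]
    refine ENNReal.ofReal_le_ofReal (le_of_eq ?_)
    rw [Finset.sum_product]
    simp only [Finset.sum_const, nsmul_eq_mul]
    rw [← Finset.mul_sum, ← Finset.mul_sum, ← Finset.sum_mul, ← Finset.mul_sum,
      Finset.sum_add_distrib, ← Finset.mul_sum, Finset.sum_const, nsmul_eq_mul, ← hΦ,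
      Finset.prod_range_succ', ← hQ, Nat.cast_zero, add_zero]
    field_simp

/-! ### Minimum-weight paths follow the exploration -/

/-- The weight of the walk that starts at the given vertex and then visits the listed ones. -/
noncomputable def listWeight {n : ℕ} (w : Sym2 (Fin n) → ℝ) : Fin n → List (Fin n) → ℝ
  | _, [] => 0
  | v, u :: L => w s(v, u) + listWeight w u L

theorem listWeight_nonneg {n : ℕ} {w : Sym2 (Fin n) → ℝ} (hw : ∀ c, 0 ≤ w c)
    (L : List (Fin n)) : ∀ v, 0 ≤ listWeight w v L := by
  induction L with
  | nil => exact fun v => le_rfl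
  | cons u L ih => exact fun v => add_nonneg (hw _) (ih u)

theorem listWeight_append_cons {n : ℕ} (w : Sym2 (Fin n) → ℝ) (A B : List (Fin n)) (u : Fin n) :
    ∀ v, listWeight w v (A ++ u :: B) = listWeight w v (A ++ [u]) + listWeight w u B := by
  induction A with
  | nil =>
    intro v
    simp [listWeight]
  | cons a A ih =>
    intro v
    simp only [List.cons_append, listWeight, ih a, add_assoc]

theorem getLastD_notMem {n : ℕ} {S : Finset (Fin n)} (L : List (Fin n)) :
    ∀ x, x ∉ S → (∀ y ∈ L, y ∉ S) → L.getLastD x ∉ S := by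
  induction L with
  | nil => exact fun x hx _ => hx
  | cons a L ih =>
    intro x _ hL
    rw [List.getLastD_cons]
    exact ih a (hL a (by simp)) fun y hy => hL y (by simp [hy])

/-- Paths avoiding `S` altogether do not use the cut, so they keep their weight. -/
theorem listWeight_residual_of_notMem {n : ℕ} {w : Sym2 (Fin n) → ℝ} {S : Finset (Fin n)}
    {e : Sym2 (Fin n)} (he : e ∈ cutEdges S) (L : List (Fin n)) :
    ∀ v, v ∉ S → (∀ y ∈ L, y ∉ S) →
      listWeight (residualWeights (cutEdges S) e w) v L = listWeight w v L := by
  induction L with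
  | nil => exact fun v _ _ => rfl
  | cons a L ih =>
    intro v hv hL
    have ha : a ∉ S := hL a (by simp)
    have hcut : s(v, a) ∉ cutEdges S := by
      rw [mk_mem_cutEdges]
      tauto
    have hne : s(v, a) ≠ e := fun h => hcut (h ▸ he)
    rw [listWeight, listWeight, ih a ha fun y hy => hL y (by simp [hy])]
    simp only [residualWeights, if_neg hne, if_neg hcut]

/-- Paths that leave `S` at once, and not through `u`, lose the weight of the lightest
edge of the cut. -/
theorem listWeight_residual_cons {n : ℕ} {w : Sym2 (Fin n) → ℝ} {S : Finset (Fin n)}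
    {a u : Fin n} (ha : a ∈ S) (hu : u ∉ S) {v x : Fin n} {L : List (Fin n)}
    (hv : v ∈ S) (hx : x ∉ S) (hxu : x ≠ u) (hL : ∀ y ∈ L, y ∉ S) :
    listWeight (residualWeights (cutEdges S) s(a, u) w) v (x :: L) =
      listWeight w v (x :: L) - w s(a, u) := by
  have he : s(a, u) ∈ cutEdges S := mk_mem_cutEdges.2 (Or.inl ⟨ha, hu⟩)
  have hcut : s(v, x) ∈ cutEdges S := mk_mem_cutEdges.2 (Or.inl ⟨hv, hx⟩)
  have hne : s(v, x) ≠ s(a, u) := by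
    intro h
    rcases Sym2.eq_iff.1 h with ⟨_, h2⟩ | ⟨_, h2⟩
    · exact hxu h2
    · exact hx (h2 ▸ ha)
  rw [listWeight, listWeight, listWeight_residual_of_notMem he L x hx hL]
  simp only [residualWeights, if_neg hne, if_pos hcut]
  ring

/-- The path `s :: L` has minimum weight among all paths that start in `S`, leave `S` at once
and for good, and have the same endpoint. -/
def IsMinList {n : ℕ} (w : Sym2 (Fin n) → ℝ) (S : Finset (Fin n)) (s : Fin n)
    (L : List (Fin n)) : Prop :=
  ∀ s' ∈ S, ∀ L' : List (Fin n), L'.Nodup → (∀ x ∈ L', x ∉ S) →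
    L'.getLastD s' = L.getLastD s → listWeight w s L ≤ listWeight w s' L'

/-- If the exploration traverses the first edge `s(s, x)` of a minimum-weight path, then the rest
of this path is a minimum-weight path for the new explored set. -/
theorem IsMinList.tail {n : ℕ} {w : Sym2 (Fin n) → ℝ} {S : Finset (Fin n)} {s x : Fin n}
    {L : List (Fin n)} (h : IsMinList w S s (x :: L)) (hs : s ∈ S) (hxS : x ∉ S)
    (hL : ∀ y ∈ L, y ∉ S) :
    IsMinList (residualWeights (cutEdges S) s(s, x) w) (insert x S) x L := by
  intro s' hs' L' hnd hL' hlast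
  have he : s(s, x) ∈ cutEdges S := mk_mem_cutEdges.2 (Or.inl ⟨hs, hxS⟩)
  have hL'S : ∀ y ∈ L', y ∉ S := fun y hy hyS => hL' y hy (Finset.mem_insert_of_mem hyS)
  have hL'x : x ∉ L' := fun hx => hL' x hx (Finset.mem_insert_self _ _)
  rw [listWeight_residual_of_notMem he L x hxS hL]
  rcases Finset.mem_insert.1 hs' with rfl | hs'S
  · rw [listWeight_residual_of_notMem he L' s' hxS hL'S]
    have := h s hs (s' :: L') (List.nodup_cons.2 ⟨hL'x, hnd⟩)
      (by simpa using ⟨hxS, hL'S⟩) (by simpa only [List.getLastD_cons] using hlast)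
    simpa [listWeight] using this
  · cases L' with
    | nil =>
      exfalso
      have := getLastD_notMem L x hxS hL
      rw [← hlast] at this
      exact this hs'S
    | cons y L' =>
      rw [listWeight_residual_cons hs hxS hs'S (hL'S y (by simp))
        (fun hyx => hL'x (by simp [hyx])) fun y' hy' => hL'S y' (by simp [hy'])]
      have := h s' hs'S (y :: L') hnd hL'S
        (by simpa only [List.getLastD_cons] using hlast)
      rw [listWeight] at this
      linarith

/-- If the exploration traverses an edge `s(a, u)` with `u` outside of a minimum-weight path,
then this path is still a minimum-weight path for the new explored set. -/
theorem IsMinList.keep {n : ℕ} {w : Sym2 (Fin n) → ℝ} {S : Finset (Fin n)} {s a u : Fin n}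
    {L : List (Fin n)} (h : IsMinList w S s L) (hs : s ∈ S) (ha : a ∈ S) (hu : u ∉ S)
    (hL : ∀ y ∈ L, y ∉ S) (huL : u ∉ L)
    (hw : ∀ c, 0 ≤ residualWeights (cutEdges S) s(a, u) w c) :
    IsMinList (residualWeights (cutEdges S) s(a, u) w) (insert u S) s L := by
  intro s' hs' L' hnd hL' hlast
  cases L with
  | nil => exact listWeight_nonneg hw L' s'
  | cons x L =>
    have he : s(a, u) ∈ cutEdges S := mk_mem_cutEdges.2 (Or.inl ⟨ha, hu⟩)
    have hL'S : ∀ y ∈ L', y ∉ S := fun y hy hyS => hL' y hy (Finset.mem_insert_of_mem hyS)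
    have hL'u : u ∉ L' := fun hx => hL' u hx (Finset.mem_insert_self _ _)
    have hxu : x ≠ u := fun hxu => huL (by simp [hxu])
    rw [listWeight_residual_cons ha hu hs (hL x (by simp)) hxu fun y hy => hL y (by simp [hy])]
    rcases Finset.mem_insert.1 hs' with rfl | hs'S
    · rw [listWeight_residual_of_notMem he L' s' hu hL'S]
      have := h a ha (s' :: L') (List.nodup_cons.2 ⟨hL'u, hnd⟩)
        (by simpa using ⟨hu, hL'S⟩) (by simpa only [List.getLastD_cons] using hlast)
      simp only [listWeight] at this ⊢
      linarith
    · cases L' with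
      | nil =>
        exfalso
        have hxI : x ∉ insert u S := by
          simpa using ⟨hxu, hL x (by simp)⟩
        have := getLastD_notMem (S := insert u S) L x hxI fun y hy => by
          have h1 := hL y (by simp [hy])
          have h2 : y ≠ u := fun hyu => huL (by simp [← hyu, hy])
          simpa using ⟨h2, h1⟩
        rw [List.getLastD_cons] at hlast
        rw [← hlast] at this
        exact this hs'
      | cons y L' =>
        rw [listWeight_residual_cons ha hu hs'S (hL'S y (by simp))
          (fun hyx => hL'u (by simp [hyx])) fun y' hy' => hL'S y' (by simp [hy'])]
        exact sub_le_sub_right (h s' hs'S (y :: L') hnd hL'S hlast) _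

theorem residualWeights_nonneg {ι : Type*} [DecidableEq ι] {C : Finset ι} {e : ι} {w : ι → ℝ}
    (hw : ∀ c, 0 ≤ w c) (he : ∀ c ∈ C, w e ≤ w c) (c : ι) : 0 ≤ residualWeights C e w c := by
  unfold residualWeights
  split_ifs with h1 h2
  · exact mul_nonneg (Nat.cast_nonneg _) (hw e)
  · exact sub_nonneg.2 (he c h2)
  · exact hw c

/-- Along the exploration with suitably chosen lightest edges, the depths follow a given
minimum-weight path. -/
theorem mem_Deep {n : ℕ} (K : ℝ) (m : ℕ) : ∀ (S : Finset (Fin n)) (ℓ : Fin n → ℕ)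
    (w : Sym2 (Fin n) → ℝ) (s : Fin n) (L : List (Fin n)), s ∈ S → Sᶜ.card = m →
    (∀ c, 0 ≤ w c) → L.Nodup → (∀ x ∈ L, x ∉ S) → IsMinList w S s L →
    K ≤ (ℓ s : ℝ) + L.length → w ∈ Deep K m S ℓ := by
  induction m with
  | zero =>
    intro S ℓ w s L hs hm _ _ hL _ hK
    have hS : ∀ x, x ∈ S := by
      intro x
      by_contra hx
      have : x ∈ Sᶜ := Finset.mem_compl.2 hx
      rw [Finset.card_eq_zero.1 hm] at this
      simp at this
    have hnil : L = [] := List.eq_nil_iff_forall_not_mem.2 fun x hx => hL x hx (hS x)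
    subst hnil
    exact ⟨s, hs, by simpa using hK⟩
  | succ m ih =>
    intro S ℓ w s L hs hm hw hnd hL hmin hK
    have hcard : ∀ b, b ∉ S → (insert b S)ᶜ.card = m := by
      intro b hb
      have h1 := Finset.card_compl_add_card S
      have h2 := Finset.card_compl_add_card (insert b S)
      rw [Finset.card_insert_of_notMem hb] at h2
      omega
    by_cases hfirst : ∃ x L', L = x :: L' ∧ ∀ c ∈ cutEdges S, w s(s, x) ≤ w c
    · obtain ⟨x, L', rfl, hx⟩ := hfirst
      have hxS : x ∉ S := hL x (by simp)
      rw [List.nodup_cons] at hnd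
      have hL' : ∀ y ∈ L', y ∉ S := fun y hy => hL y (by simp [hy])
      simp only [Deep, Set.mem_iUnion]
      refine ⟨(s, x), by simp [hs, hxS], hx, ?_⟩
      refine ih _ _ _ x L' (Finset.mem_insert_self _ _) (hcard x hxS)
        (residualWeights_nonneg hw hx) hnd.2 ?_ (hmin.tail hs hxS hL') ?_
      · intro y hy hyI
        rcases Finset.mem_insert.1 hyI with rfl | hyS
        · exact hnd.1 hy
        · exact hL' y hy hyS
      · rw [Function.update_self]
        push_cast at hK ⊢
        rw [List.length_cons] at hK
        push_cast at hK
        linarith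
    · have hne : (S ×ˢ Sᶜ).Nonempty :=
        Finset.Nonempty.product ⟨s, hs⟩ (Finset.card_pos.1 (by omega))
      obtain ⟨⟨a, u⟩, hau, hargmin⟩ := Finset.exists_min_image (S ×ˢ Sᶜ)
        (fun p => w s(p.1, p.2)) hne
      simp only [Finset.mem_product, Finset.mem_compl] at hau
      obtain ⟨ha, hu⟩ := hau
      have hmn : ∀ c ∈ cutEdges S, w s(a, u) ≤ w c := by
        intro c hc
        obtain ⟨p, hp, rfl⟩ := Finset.mem_image.1 hc
        exact hargmin p hp
      -- otherwise entering `L` at `u` from `a` would beat the original path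
      have huL : u ∉ L := by
        intro huL
        refine hfirst ?_
        obtain ⟨A, B, rfl⟩ := List.append_of_mem huL
        have hle := hmin a ha (u :: B) (hnd.sublist (List.sublist_append_right A _))
          (fun x hx => hL x (by simp only [List.mem_append]; exact Or.inr hx))
          (by simp [List.getLastD_eq_getLast?, List.getLast?_cons])
        cases A with
        | nil =>
          refine ⟨u, B, rfl, fun c hc => le_trans ?_ (hmn c hc)⟩
          simpa [listWeight] using hle
        | cons x A =>
          refine ⟨x, A ++ u :: B, rfl, fun c hc => le_trans ?_ (hmn c hc)⟩
          rw [listWeight_append_cons, List.cons_append, listWeight, listWeight] at hle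
          linarith [listWeight_nonneg hw (A ++ [u]) x]
      simp only [Deep, Set.mem_iUnion]
      refine ⟨(a, u), by simp [ha, hu], hmn, ?_⟩
      refine ih _ _ _ s L (Finset.mem_insert_of_mem hs) (hcard u hu)
        (residualWeights_nonneg hw hmn) hnd ?_
        (hmin.keep hs ha hu hL huL (residualWeights_nonneg hw hmn)) ?_
      · intro y hy hyI
        rcases Finset.mem_insert.1 hyI with rfl | hyS
        · exact huL hy
        · exact hL y hy hyS
      · rwa [Function.update_of_ne (ne_of_mem_of_not_mem hs hu)]

theorem exists_path_of_list {n : ℕ} (w : Sym2 (Fin n) → ℝ) (L : List (Fin n)) :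
    ∀ v, (v :: L).Nodup → ∃ q : (Kn n).Walk v (L.getLastD v),
      q.support = v :: L ∧ walkWeight w q = listWeight w v L := by
  induction L with
  | nil => exact fun v _ => ⟨SimpleGraph.Walk.nil, rfl, rfl⟩
  | cons u L ih =>
    intro v hnd
    have hvu : (Kn n).Adj v u := by
      rw [List.nodup_cons] at hnd
      exact fun h => hnd.1 (by simp [h])
    obtain ⟨q, hq, hqw⟩ := ih u (List.nodup_cons.1 hnd).2
    rw [List.getLastD_cons]
    refine ⟨SimpleGraph.Walk.cons hvu q, by simp [hq], ?_⟩
    simp only [walkWeight, SimpleGraph.Walk.edges_cons, List.map_cons, List.sum_cons,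
      listWeight] at hqw ⊢
    rw [hqw]

theorem walkWeight_eq_listWeight {n : ℕ} (w : Sym2 (Fin n) → ℝ) {i j : Fin n}
    (p : (Kn n).Walk i j) : walkWeight w p = listWeight w i p.support.tail := by
  induction p with
  | nil => simp [walkWeight, listWeight]
  | cons h p ih =>
    rename_i a b c
    rw [SimpleGraph.Walk.support_cons, List.tail_cons, ← SimpleGraph.Walk.cons_tail_support p,
      listWeight, ← ih]
    simp [walkWeight]

theorem getLastD_support_tail {n : ℕ} {i j : Fin n} (p : (Kn n).Walk i j) :
    p.support.tail.getLastD i = j := by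
  induction p with
  | nil => rfl
  | cons h p ih =>
    rw [SimpleGraph.Walk.support_cons, List.tail_cons, ← SimpleGraph.Walk.cons_tail_support p,
      List.getLastD_cons, ih]

theorem isMinList_of_isMinPath {n : ℕ} {w : Sym2 (Fin n) → ℝ} {i j : Fin n}
    {p : (Kn n).Walk i j} (hp : IsMinPath w p) : IsMinList w {i} i p.support.tail := by
  intro s' hs' L' hnd hL' hlast
  obtain rfl := Finset.mem_singleton.1 hs'
  rw [getLastD_support_tail] at hlast
  subst hlast
  have hnd' : (s' :: L').Nodup := List.nodup_cons.2 ⟨fun h => hL' s' h hs', hnd⟩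
  obtain ⟨q, hq, hqw⟩ := exists_path_of_list w L' s' hnd'
  rw [← walkWeight_eq_listWeight, ← hqw]
  exact hp.2 q ((SimpleGraph.Walk.isPath_def q).2 (hq ▸ hnd'))

/-- A long minimum-weight path makes the exploration from its first vertex deep. -/
theorem exists_mem_Deep {n : ℕ} {w : Sym2 (Fin n) → ℝ} (hw : ∀ c, 0 ≤ w c) {K : ℝ} (hK0 : 0 < K)
    (hK : K ≤ (maxMinLen w : ℝ)) : ∃ i : Fin n, w ∈ Deep K (n - 1) {i} (fun _ => 0) := by
  set T : Set ℕ := {L : ℕ | ∃ (i j : Fin n) (p : (Kn n).Walk i j), IsMinPath w p ∧ p.length = L}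
  have hbdd : BddAbove T := by
    refine ⟨n, ?_⟩
    rintro L ⟨i, j, p, hp, rfl⟩
    simpa using hp.1.length_lt.le
  have hne : T.Nonempty := by
    by_contra hT
    rw [Set.not_nonempty_iff_eq_empty] at hT
    have : maxMinLen w = 0 := by
      change sSup T = 0
      rw [hT, csSup_empty, bot_eq_zero]
    rw [this] at hK
    push_cast at hK
    linarith
  obtain ⟨i, j, p, hp, hlen⟩ := Nat.sSup_mem hne hbdd
  have hsupp : p.support = i :: p.support.tail := (SimpleGraph.Walk.cons_tail_support p).symm
  have hnd : (i :: p.support.tail).Nodup := hsupp ▸ hp.1.support_nodup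
  rw [List.nodup_cons] at hnd
  refine ⟨i, mem_Deep K _ {i} _ w i p.support.tail (Finset.mem_singleton_self i) ?_ hw hnd.2 ?_
    (isMinList_of_isMinPath hp) ?_⟩
  · rw [Finset.card_compl, Finset.card_singleton, Fintype.card_fin]
  · intro x hx hxi
    rw [Finset.mem_singleton] at hxi
    exact hnd.1 (hxi ▸ hx)
  · have : maxMinLen w = p.length := hlen.symm
    rw [this] at hK
    simpa using hK

/-! ### The tail bound -/

/-- The value at `z` of the product appearing in the moment bound is at most `e ^ z * m ^ z`. -/
theorem prod_le_exp {z : ℝ} (hz : 0 ≤ z) (m : ℕ) :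
    ∏ k ∈ Finset.range m, (1 + z / ((1 : ℝ) + k)) ≤ Real.exp (z * (1 + Real.log m)) := by
  calc ∏ k ∈ Finset.range m, (1 + z / ((1 : ℝ) + k))
      ≤ ∏ k ∈ Finset.range m, Real.exp (z / ((1 : ℝ) + k)) := by
        refine Finset.prod_le_prod (fun k _ => by positivity) fun k _ => ?_
        rw [add_comm]
        exact Real.add_one_le_exp _
    _ = Real.exp (z * harmonic m) := by
        rw [← Real.exp_sum, harmonic, Rat.cast_sum, Finset.mul_sum]
        congr 1
        refine Finset.sum_congr rfl fun k _ => ?_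
        push_cast
        rw [add_comm, div_eq_mul_inv]
    _ ≤ _ := by
        gcongr
        exact harmonic_le_one_add_log m

/-- For all `n ≥ 3` and all `t ≥ 0`,
`P(max_{i,j} |P_{ij}| ≥ α* log n + t) ≤ e^{α* + t / log n} · e^{−t}`, where `α*` is the
unique solution in `(1,∞)` of `α log α − α = 1`. -/
theorem stmt4 (αs : ℝ) (hαs : αs ∈ Set.Ioi (1 : ℝ))
    (heq : αs * Real.log αs - αs = 1) :
    ∀ n : ℕ, 3 ≤ n → ∀ t : ℝ, 0 ≤ t →
      edgeSpace n {w | αs * Real.log n + t ≤ (maxMinLen w : ℝ)} ≤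
        ENNReal.ofReal (Real.exp (αs + t / Real.log n) * Real.exp (-t)) := by
  intro n hn t ht
  have hα : 1 < αs := hαs
  have hα0 : 0 < αs := by linarith
  have hnR : (3 : ℝ) ≤ n := by exact_mod_cast hn
  have hlogn : 0 < Real.log n := Real.log_pos (by linarith)
  have hlogα : 1 ≤ Real.log αs := by nlinarith
  set K : ℝ := αs * Real.log n + t with hK
  have hK0 : 0 < K := by positivity
  have : IsProbabilityMeasure (expMeasure (1 / (n : ℝ))) :=
    isProbabilityMeasure_expMeasure (by positivity)
  have hspace : edgeSpace n =
      Measure.pi (fun _ : Sym2 (Fin n) => expMeasure (1 / (n : ℝ))) := rfl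
  rw [hspace]
  have hnonneg : ∀ᵐ w ∂(Measure.pi fun _ : Sym2 (Fin n) => expMeasure (1 / (n : ℝ))),
      ∀ c, 0 ≤ w c := by
    refine ae_all_iff.2 fun c => ?_
    exact (measurePreserving_eval (fun _ : Sym2 (Fin n) => expMeasure (1 / (n : ℝ)))
      c).quasiMeasurePreserving.ae (expMeasure_ae_nonneg _)
  have hsub : ∀ᵐ w ∂(Measure.pi fun _ : Sym2 (Fin n) => expMeasure (1 / (n : ℝ))),
      w ∈ {w | K ≤ (maxMinLen w : ℝ)} →
      w ∈ ⋃ i ∈ (Finset.univ : Finset (Fin n)), Deep K (n - 1) {i} (fun _ => 0) := by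
    filter_upwards [hnonneg] with w hw hwK
    obtain ⟨i, hi⟩ := exists_mem_Deep hw hK0 hwK
    exact Set.mem_biUnion (Finset.mem_coe.2 (Finset.mem_univ i)) hi
  refine (measure_mono_ae hsub).trans ((measure_biUnion_finset_le _ _).trans ?_)
  have hbound : ∀ i ∈ (Finset.univ : Finset (Fin n)),
      Measure.pi (fun _ : Sym2 (Fin n) => expMeasure (1 / (n : ℝ)))
        (Deep K (n - 1) {i} (fun _ => 0)) ≤
      ENNReal.ofReal (αs ^ (-K) * Real.exp (αs * (1 + Real.log n))) := by
    intro i _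
    refine (measure_Deep_le hα.le K (n - 1) {i} _ (Finset.singleton_nonempty i) ?_).trans ?_
    · rw [Finset.card_compl, Finset.card_singleton, Fintype.card_fin]
    · rw [Finset.card_singleton, Finset.sum_singleton, pow_zero, mul_one, Nat.cast_one]
      refine ENNReal.ofReal_le_ofReal (mul_le_mul_of_nonneg_left
        ((prod_le_exp hα0.le _).trans ?_) (Real.rpow_nonneg hα0.le _))
      have h1 : (0 : ℝ) < ((n - 1 : ℕ) : ℝ) := by
        exact_mod_cast (by omega : 0 < n - 1)
      have h2 : ((n - 1 : ℕ) : ℝ) ≤ n := by exact_mod_cast Nat.sub_le n 1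
      gcongr
  refine (Finset.sum_le_sum hbound).trans ?_
  rw [Finset.sum_const, Finset.card_univ, Fintype.card_fin, nsmul_eq_mul,
    ← ENNReal.ofReal_natCast, ← ENNReal.ofReal_mul (by positivity)]
  refine ENNReal.ofReal_le_ofReal ?_
  rw [Real.rpow_def_of_pos hα0]
  nth_rewrite 1 [← Real.exp_log (by linarith : (0 : ℝ) < n)]
  rw [← Real.exp_add, ← Real.exp_add, ← Real.exp_add]
  refine Real.exp_le_exp.2 ?_
  -- `αs * log αs = 1 + αs` makes all multiples of `log n` cancel
  have h1 : Real.log αs * K = (1 + αs) * Real.log n + t * Real.log αs := by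
    rw [hK]
    linear_combination Real.log n * heq
  have h2 : t ≤ t * Real.log αs := le_mul_of_one_le_right ht hlogα
  have h3 : 0 ≤ t / Real.log n := by positivity
  rw [mul_neg, h1]
  linarith
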